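/- Let r, d, k, t ∈ ℕ with k ≥ 1 and 2kt ≤ 3^{d−1}, and let B : P_{r,2d} → ℂ satisfy B̂(α) = 0 for all α ∈ Λ_{r,2d} with |α| > t. Let B' : 𝔉_r → ℂ be the lift of B, i.e., B' := Σ_{α ∈ Λ_{r,2d}} B̂(α)·χ_α where the χ_α on the right-hand side are characters of 𝔉_r. Then ‖B‖_{2k} = ‖B'‖_{2k}, where ‖B‖_{2k} := (E_{f∈P_{r,2d}}|B(f)|^{2k})^{1/2k} and ‖B'‖_{2k} := (E_{f∈𝔉_r}|B'(f)|^{2k})^{1/2k}. -/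

import Mathlib

open scoped BigOperators

abbrev F3 := ZMod 3
abbrev Pt (r : ℕ) := Fin r → F3
abbrev Fn (r : ℕ) := Pt r → F3

/-- The set of functions `F₃^r → F₃` computed by polynomials of total degree at most `d`
with individual degrees at most `2`. -/
def PolySet (r d : ℕ) : Set (Fn r) :=
  {g | ∃ P : MvPolynomial (Fin r) F3,
        P.totalDegree ≤ d ∧ (∀ i, P.degreeOf i ≤ 2) ∧
        ∀ x, g x = MvPolynomial.eval x P}

noncomputable def polyFinset (r d : ℕ) : Finset (Fn r) :=
  (Set.toFinite (PolySet r d)).toFinset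

/-- Support size `|β|`. -/
def supp {r : ℕ} (β : Fn r) : ℕ := (Finset.univ.filter fun x => β x ≠ 0).card

/-- Dot product `⟨β, f⟩ = Σ_x β(x) f(x)` in `F₃`. -/
def dotF {r : ℕ} (β f : Fn r) : F3 := ∑ x, β x * f x

noncomputable def ω : ℂ := Complex.exp (2 * (Real.pi : ℂ) * Complex.I / 3)

/-- The character `χ_β(f) = ω^{⟨β,f⟩}`. -/
noncomputable def chi {r : ℕ} (β f : Fn r) : ℂ := ω ^ (dotF β f).val

/-- The dual `S^⊥` of a set of functions. -/
def dualSet (r : ℕ) (S : Set (Fn r)) : Set (Fn r) := {g | ∀ h ∈ S, dotF g h = 0}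

/-- `Λ` contains exactly one representative, of minimal support size, from each coset
of `𝔉_r` modulo `P_{r,d}^⊥`. -/
def IsMinRepSet (r d : ℕ) (Λ : Finset (Fn r)) : Prop :=
  (∀ β : Fn r, ∃! β', β' ∈ Λ ∧ β - β' ∈ dualSet r (PolySet r d)) ∧
  (∀ β' ∈ Λ, ∀ γ : Fn r, β' - γ ∈ dualSet r (PolySet r d) → supp β' ≤ supp γ)

/-- The noise `a·(p² + 1)` (pointwise). -/
def shift {r : ℕ} (p : Fn r) (a : F3) : Fn r := fun x => a * (p x ^ 2 + 1)

/-- Fourier coefficient `Â(β)` of a function on `P_{r,d}`. -/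
noncomputable def fourierP (r d : ℕ) (A : Fn r → ℂ) (β : Fn r) : ℂ :=
  (∑ g ∈ polyFinset r d, A g * (starRingEnd ℂ) (chi β g)) / ((polyFinset r d).card : ℂ)

/-- Expectation `E_{f ∈ P_{r,d}}[A(f)]`. -/
noncomputable def expP (r d : ℕ) (A : Fn r → ℝ) : ℝ :=
  (∑ f ∈ polyFinset r d, A f) / ((polyFinset r d).card : ℝ)

/-- Degree-`k` influence `Inf_x^{≤k}(A)` with respect to a set `Λ` of minimal-support
coset representatives. -/
noncomputable def infP (r d k : ℕ) (Λ : Finset (Fn r)) (A : Fn r → ℝ) (x : Pt r) : ℝ :=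
  ∑ β ∈ Λ.filter (fun β => β x ≠ 0 ∧ supp β ≤ k),
    ‖fourierP r d (fun g => (A g : ℂ)) β‖ ^ 2

open MvPolynomial in
/-- A small nonempty set has a point isolated by a polynomial of low degree. -/
lemma isolate (r : ℕ) : ∀ (j : ℕ) (S : Finset (Pt r)), S.Nonempty → S.card ^ 2 ≤ 3 ^ j →
    ∃ P : MvPolynomial (Fin r) F3, P.totalDegree ≤ j ∧ (∀ i, P.degreeOf i ≤ 2) ∧
      (∀ i, (∀ x ∈ S, ∀ y ∈ S, x i = y i) → P.degreeOf i = 0) ∧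
      ∃ x ∈ S, eval x P ≠ 0 ∧ ∀ y ∈ S, y ≠ x → eval y P = 0 := by
  intro j
  induction j using Nat.strong_induction_on with
  | _ j ih =>
  intro S hS hc
  by_cases h1 : ∀ x ∈ S, ∀ y ∈ S, x = y
  · obtain ⟨x, hx⟩ := hS
    refine ⟨1, by simp, by simp, by simp, x, hx, by simp, ?_⟩
    intro y hy hne
    exact absurd (h1 y hy x hx) hne
  push Not at h1
  obtain ⟨x, hx, y, hy, hxy⟩ := h1
  obtain ⟨i, hi⟩ := Function.ne_iff.mp hxy
  set T : Finset F3 := S.image (fun z => z i) with hT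
  have hTne : T.Nonempty := hS.image _
  obtain ⟨c, hcT, hcmin⟩ := T.exists_min_image
    (fun c => (S.filter (fun z => z i = c)).card) hTne
  have hsum : S.card = ∑ b ∈ T, (S.filter (fun z => z i = b)).card :=
    Finset.card_eq_sum_card_image _ _
  have hle : T.card * (S.filter (fun z => z i = c)).card ≤ S.card := by
    rw [hsum]
    simpa using Finset.card_nsmul_le_sum T _ _ hcmin
  have hT2 : 1 < T.card := Finset.one_lt_card.mpr
    ⟨x i, Finset.mem_image_of_mem _ hx, y i, Finset.mem_image_of_mem _ hy, hi⟩
  have hT3 : T.card ≤ 3 := by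
    simpa [ZMod.card] using Finset.card_le_univ T
  set Sc := S.filter (fun z => z i = c) with hSc
  have hScne : Sc.Nonempty := by
    obtain ⟨z, hz, hzc⟩ := Finset.mem_image.mp hcT
    exact ⟨z, Finset.mem_filter.mpr ⟨hz, hzc⟩⟩
  have hScpos : 1 ≤ Sc.card := hScne.card_pos
  have hsq : T.card ^ 2 * Sc.card ^ 2 ≤ 3 ^ j := by
    calc T.card ^ 2 * Sc.card ^ 2 = (T.card * Sc.card) ^ 2 := by ring
      _ ≤ S.card ^ 2 := Nat.pow_le_pow_left hle 2
      _ ≤ _ := hc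
  obtain ⟨e, he, he1, hej, hcard⟩ : ∃ e, T.card = e + 1 ∧ 1 ≤ e ∧ e ≤ j ∧
      Sc.card ^ 2 ≤ 3 ^ (j - e) := by
    have hp : 1 ≤ Sc.card ^ 2 := Nat.one_le_pow _ _ hScpos
    have : T.card = 2 ∨ T.card = 3 := by omega
    rcases this with h | h
    · rw [h] at hsq
      match j, hsq with
      | 0, hsq => simp at hsq; omega
      | j + 1, hsq =>
        refine ⟨1, h, le_rfl, by omega, ?_⟩
        rw [pow_succ] at hsq
        simp only [Nat.add_sub_cancel]
        omega
    · rw [h] at hsq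
      match j, hsq with
      | 0, hsq => simp at hsq; omega
      | 1, hsq => simp at hsq; omega
      | j + 2, hsq =>
        refine ⟨2, h, by omega, by omega, ?_⟩
        rw [pow_add] at hsq
        simp only [Nat.add_sub_cancel]
        omega
  obtain ⟨P, hPt, hPd, hPc, z, hz, hzne, hz0⟩ := ih (j - e) (by omega) Sc hScne hcard
  have hzc : z i = c := (Finset.mem_filter.mp hz).2
  set Q : MvPolynomial (Fin r) F3 := ∏ b ∈ T.erase c, (X i - C b) with hQ
  have hTe : (T.erase c).card = e := by rw [Finset.card_erase_of_mem hcT]; omega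
  have hQt : Q.totalDegree ≤ e := by
    refine (totalDegree_finsetProd _ _).trans ?_
    rw [← hTe, Finset.card_eq_sum_ones]
    refine Finset.sum_le_sum fun b _ => ?_
    exact (totalDegree_sub_C_le _ _).trans (by simp)
  have hQd : ∀ l, Q.degreeOf l ≤ if l = i then e else 0 := by
    intro l
    refine (degreeOf_prod_le _ _ _).trans ?_
    have : ∀ b ∈ T.erase c, degreeOf l (X i - C b : MvPolynomial (Fin r) F3)
        ≤ if l = i then 1 else 0 := by
      intro b _
      refine (degreeOf_sub_le _ _ _).trans ?_
      simp [degreeOf_X]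
    refine (Finset.sum_le_sum this).trans ?_
    split_ifs <;> simp [hTe]
  have hPi : P.degreeOf i = 0 := by
    apply hPc
    intro a ha b hb
    rw [(Finset.mem_filter.mp ha).2, (Finset.mem_filter.mp hb).2]
  refine ⟨Q * P, ?_, ?_, ?_, z, (Finset.mem_filter.mp hz).1, ?_, ?_⟩
  · exact (totalDegree_mul _ _).trans (by omega)
  · intro l
    refine (degreeOf_mul_le _ _ _).trans ?_
    have := hQd l
    have := hPd l
    split_ifs at * with h
    · subst h; omega
    · omega
  · intro l hl
    have hli : l ≠ i := by
      rintro rfl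
      exact hi (hl x hx y hy)
    have h1 := hQd l
    rw [if_neg hli] at h1
    have h2 : P.degreeOf l = 0 := hPc l fun a ha b hb =>
      hl a (Finset.mem_filter.mp ha).1 b (Finset.mem_filter.mp hb).1
    have := degreeOf_mul_le l Q P
    omega
  · rw [map_mul]
    refine mul_ne_zero ?_ hzne
    rw [hQ, map_prod]
    refine Finset.prod_ne_zero_iff.mpr fun b hb => ?_
    simp only [map_sub, eval_X, eval_C, hzc]
    exact sub_ne_zero.mpr (Finset.ne_of_mem_erase hb).symm
  · intro w hw hwz
    rw [map_mul]
    by_cases hwc : w i = c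
    · rw [hz0 w (Finset.mem_filter.mpr ⟨hw, hwc⟩) hwz, mul_zero]
    · have : eval w Q = 0 := by
        rw [hQ, map_prod]
        refine Finset.prod_eq_zero (i := w i)
          (Finset.mem_erase.mpr ⟨hwc, Finset.mem_image_of_mem _ hw⟩) ?_
        simp
      rw [this, zero_mul]

lemma dual_small {r d : ℕ} {β : Fn r} (hβ : β ∈ dualSet r (PolySet r (2 * d)))
    (hs : supp β ≤ 3 ^ d) : β = 0 := by
  by_contra hne
  obtain ⟨x0, hx0⟩ := Function.ne_iff.mp hne
  obtain ⟨P, h1, h2, -, x, hx, hxne, hx0'⟩ := isolate r (2 * d)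
    (Finset.univ.filter fun x => β x ≠ 0) ⟨x0, by simpa using hx0⟩ (by
      rw [mul_comm, pow_mul]
      exact Nat.pow_le_pow_left hs 2)
  have h := hβ (fun y => MvPolynomial.eval y P) ⟨P, h1, h2, fun _ => rfl⟩
  unfold dotF at h
  rw [Finset.sum_eq_single x] at h
  · have hb : β x ≠ 0 := by simpa using hx
    exact (mul_ne_zero hb hxne) h
  · intro y _ hyx
    by_cases hy : β y = 0
    · simp [hy]
    · beta_reduce; rw [hx0' y (by simpa using hy) hyx, mul_zero]
  · simp

lemma omega_prim : IsPrimitiveRoot ω 3 := by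
  have := Complex.isPrimitiveRoot_exp 3 (by norm_num)
  simpa [ω] using this

lemma omega_val_add (a b : F3) : ω ^ (a + b).val = ω ^ a.val * ω ^ b.val := by
  rw [ZMod.val_add, ← pow_add]
  exact (pow_eq_pow_mod _ omega_prim.pow_eq_one).symm

lemma omega_val_eq_one {a : F3} (h : ω ^ a.val = 1) : a = 0 := by
  have h1 := (omega_prim.pow_eq_one_iff_dvd _).mp h
  have h2 := ZMod.val_lt a
  exact (ZMod.val_eq_zero a).mp (Nat.eq_zero_of_dvd_of_lt h1 h2)

section dots
variable {r : ℕ}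

lemma dotF_add_left (a b f : Fn r) : dotF (a + b) f = dotF a f + dotF b f := by
  simp [dotF, add_mul, Finset.sum_add_distrib]

lemma dotF_add_right (a f g : Fn r) : dotF a (f + g) = dotF a f + dotF a g := by
  simp [dotF, mul_add, Finset.sum_add_distrib]

lemma dotF_neg_left (a f : Fn r) : dotF (-a) f = - dotF a f := by
  simp [dotF]

lemma dotF_neg_right (a f : Fn r) : dotF a (-f) = - dotF a f := by
  simp [dotF]

lemma dotF_sub_left (a b f : Fn r) : dotF (a - b) f = dotF a f - dotF b f := by
  rw [sub_eq_add_neg, dotF_add_left, dotF_neg_left, sub_eq_add_neg]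

lemma chi_add_left (a b f : Fn r) : chi (a + b) f = chi a f * chi b f := by
  simp only [chi, dotF_add_left, omega_val_add]

lemma chi_add_right (a f g : Fn r) : chi a (f + g) = chi a f * chi a g := by
  simp only [chi, dotF_add_right, omega_val_add]

lemma chi_zero_left (f : Fn r) : chi 0 f = 1 := by simp [chi, dotF]

lemma chi_zero_right (a : Fn r) : chi a 0 = 1 := by simp [chi, dotF]

lemma chi_neg_comm (a f : Fn r) : chi (-a) f = chi a (-f) := by
  simp only [chi, dotF_neg_left, dotF_neg_right]

lemma chi_norm (a f : Fn r) : ‖chi a f‖ = 1 := by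
  rw [chi, norm_pow, omega_prim.norm'_eq_one (by norm_num), one_pow]

lemma chi_conj (a f : Fn r) : (starRingEnd ℂ) (chi a f) = chi (-a) f := by
  have h1 : chi (-a) f * chi a f = 1 := by
    rw [← chi_add_left, neg_add_cancel, chi_zero_left]
  rw [eq_inv_of_mul_eq_one_left h1, Complex.inv_eq_conj (chi_norm a f)]

lemma chi_congr {d : ℕ} {a b f : Fn r} (hf : f ∈ PolySet r d)
    (h : a - b ∈ dualSet r (PolySet r d)) : chi a f = chi b f := by
  have := h f hf
  rw [dotF_sub_left, sub_eq_zero] at this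
  rw [chi, chi, this]

lemma supp_add_le (a b : Fn r) : supp (a + b) ≤ supp a + supp b := by
  unfold supp
  refine (Finset.card_le_card ?_).trans (Finset.card_union_le _ _)
  intro x hx
  simp only [Finset.mem_filter, Finset.mem_univ, true_and, Finset.mem_union, Pi.add_apply] at *
  by_contra h
  push Not at h
  exact hx (by rw [h.1, h.2, add_zero])

lemma supp_neg (a : Fn r) : supp (-a) = supp a := by simp [supp]

lemma supp_zero : supp (0 : Fn r) = 0 := by simp [supp]

lemma poly_zero (r d : ℕ) : (0 : Fn r) ∈ PolySet r d :=
  ⟨0, by simp, by simp, by simp⟩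

lemma poly_neg {d : ℕ} {f : Fn r} (hf : f ∈ PolySet r d) : -f ∈ PolySet r d := by
  obtain ⟨P, h1, h2, h3⟩ := hf
  refine ⟨-P, by rwa [MvPolynomial.totalDegree_neg], ?_, ?_⟩
  · intro i; rw [MvPolynomial.degreeOf_neg]; exact h2 i
  · intro x; simp [h3]

lemma poly_add {d : ℕ} {f g : Fn r} (hf : f ∈ PolySet r d) (hg : g ∈ PolySet r d) :
    f + g ∈ PolySet r d := by
  obtain ⟨P, h1, h2, h3⟩ := hf
  obtain ⟨Q, k1, k2, k3⟩ := hg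
  refine ⟨P + Q, (MvPolynomial.totalDegree_add _ _).trans (max_le h1 k1), ?_, ?_⟩
  · intro i; exact (MvPolynomial.degreeOf_add_le _ _ _).trans (max_le (h2 i) (k2 i))
  · intro x; simp [h3, k3]

lemma mem_polyFinset {d : ℕ} {f : Fn r} : f ∈ polyFinset r d ↔ f ∈ PolySet r d := by
  simp [polyFinset]

lemma poly_card_ne (r d : ℕ) : ((polyFinset r d).card : ℂ) ≠ 0 := by
  have : (polyFinset r d).Nonempty := ⟨0, mem_polyFinset.mpr (poly_zero r d)⟩
  exact_mod_cast this.card_pos.ne'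

lemma eq_zero_of_mul_self {c s : ℂ} (hc : c ≠ 1) (h : s = c * s) : s = 0 := by
  have : (1 - c) * s = 0 := by linear_combination h
  rcases mul_eq_zero.mp this with h | h
  · exact absurd (sub_eq_zero.mp h).symm hc
  · exact h

lemma sum_poly_dual {d : ℕ} {γ : Fn r} (h : γ ∈ dualSet r (PolySet r d)) :
    ∑ f ∈ polyFinset r d, chi γ f = (polyFinset r d).card := by
  rw [Finset.sum_congr rfl (g := fun _ => (1 : ℂ))]
  · simp
  · intro f hf
    simp [chi, h f (mem_polyFinset.mp hf)]

lemma sum_poly_nondual {d : ℕ} {γ : Fn r} (h : γ ∉ dualSet r (PolySet r d)) :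
    ∑ f ∈ polyFinset r d, chi γ f = 0 := by
  simp only [dualSet, Set.mem_setOf_eq, not_forall] at h
  obtain ⟨g, hg, hne⟩ := h
  have hc : chi γ g ≠ 1 := fun h => hne (omega_val_eq_one h)
  refine eq_zero_of_mul_self hc ?_
  rw [Finset.mul_sum]
  symm
  refine Finset.sum_nbij' (fun f => g + f) (fun f => -g + f) ?_ ?_ ?_ ?_ ?_
  · intro f hf
    exact mem_polyFinset.mpr (poly_add hg (mem_polyFinset.mp hf))
  · intro f hf
    exact mem_polyFinset.mpr (poly_add (poly_neg hg) (mem_polyFinset.mp hf))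
  · intro f _; simp
  · intro f _; simp
  · intro f _; simp [chi_add_right]

lemma exists_dotF_ne {γ : Fn r} (h : γ ≠ 0) : ∃ g : Fn r, dotF γ g ≠ 0 := by
  obtain ⟨x, hx⟩ := Function.ne_iff.mp h
  refine ⟨Pi.single x 1, ?_⟩
  simpa [dotF, Pi.single_apply] using hx

lemma dotF_comm (a b : Fn r) : dotF a b = dotF b a := by
  simp [dotF, mul_comm]

lemma sum_univ_ne {γ : Fn r} (h : γ ≠ 0) : ∑ f : Fn r, chi γ f = 0 := by
  obtain ⟨g, hne⟩ := exists_dotF_ne h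
  have hc : chi γ g ≠ 1 := fun h => hne (omega_val_eq_one h)
  refine eq_zero_of_mul_self hc ?_
  rw [Finset.mul_sum]
  symm
  refine Fintype.sum_equiv (Equiv.addLeft g) _ _ ?_
  intro f; simp [chi_add_right]

/-- Functions spanned by characters of support size at most `m`. -/
def lowSpan (r m : ℕ) : Submodule ℂ (Fn r → ℂ) :=
  Submodule.span ℂ {F | ∃ γ : Fn r, supp γ ≤ m ∧ F = chi γ}

lemma lowSpan_mul {m n : ℕ} {F G : Fn r → ℂ} (hF : F ∈ lowSpan r m) (hG : G ∈ lowSpan r n) :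
    F * G ∈ lowSpan r (m + n) := by
  have h := Submodule.mul_mem_mul hF hG
  rw [lowSpan, lowSpan, Submodule.span_mul_span] at h
  refine Submodule.span_mono ?_ h
  rintro _ ⟨_, ⟨a, ha, rfl⟩, _, ⟨b, hb, rfl⟩, rfl⟩
  refine ⟨a + b, (supp_add_le a b).trans (by omega), ?_⟩
  funext f
  simp [chi_add_left]

lemma lowSpan_pow {m : ℕ} {F : Fn r → ℂ} (hF : F ∈ lowSpan r m) (k : ℕ) :
    F ^ k ∈ lowSpan r (k * m) := by
  induction k with
  | zero =>
    refine Submodule.subset_span ⟨0, by simp [supp_zero], ?_⟩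
    funext f
    simp [chi_zero_left]
  | succ k ih =>
    rw [pow_succ, Nat.succ_mul]
    exact lowSpan_mul ih hF

lemma lowSpan_avg {d m : ℕ} (hm : m ≤ 3 ^ d) {F : Fn r → ℂ} (hF : F ∈ lowSpan r m) :
    (∑ f ∈ polyFinset r (2 * d), F f) / ((polyFinset r (2 * d)).card : ℂ)
      = (∑ f : Fn r, F f) / (Fintype.card (Fn r) : ℂ) := by
  induction hF using Submodule.span_induction with
  | mem F h =>
    obtain ⟨γ, hγ, rfl⟩ := h
    by_cases h0 : γ = 0
    · subst h0
      have hc : (Fintype.card (Fn r) : ℂ) ≠ 0 := by exact_mod_cast Fintype.card_ne_zero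
      simp only [chi_zero_left, Finset.sum_const, Finset.card_univ, nsmul_eq_mul, mul_one]
      rw [div_self (poly_card_ne r _), div_self hc]
    · have hnd : γ ∉ dualSet r (PolySet r (2 * d)) := fun h =>
        h0 (dual_small h (hγ.trans hm))
      rw [sum_poly_nondual hnd, sum_univ_ne h0]
      simp
  | zero => simp
  | add F G _ _ hF hG =>
    simp only [Pi.add_apply, Finset.sum_add_distrib, add_div, hF, hG]
  | smul c F _ hF =>
    simp only [Pi.smul_apply, smul_eq_mul, ← Finset.mul_sum, mul_div_assoc, hF]

lemma dual_neg {d : ℕ} {a : Fn r} (h : a ∈ dualSet r (PolySet r d)) :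
    -a ∈ dualSet r (PolySet r d) := by
  intro f hf
  rw [dotF_neg_left, h f hf, neg_zero]

lemma dual_add {d : ℕ} {a b : Fn r} (h : a ∈ dualSet r (PolySet r d))
    (h' : b ∈ dualSet r (PolySet r d)) : a + b ∈ dualSet r (PolySet r d) := by
  intro f hf
  rw [dotF_add_left, h f hf, h' f hf, add_zero]

lemma rep_sum_zero {d : ℕ} {Λ : Finset (Fn r)} (hΛ : IsMinRepSet r d Λ) {h : Fn r}
    (hh : h ∈ PolySet r d) (hne : h ≠ 0) : ∑ α ∈ Λ, chi α h = 0 := by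
  obtain ⟨β, hβ⟩ := exists_dotF_ne hne
  rw [dotF_comm] at hβ
  have hc : chi β h ≠ 1 := fun h => hβ (omega_val_eq_one h)
  refine eq_zero_of_mul_self hc ?_
  rw [Finset.mul_sum]
  choose rep hrep huniq using hΛ.1
  have key : ∀ a b : Fn r, b ∈ Λ → a - b ∈ dualSet r (PolySet r d) → rep a = b :=
    fun a b hb hab => (huniq a b ⟨hb, hab⟩).symm
  symm
  refine Finset.sum_nbij' (fun α => rep (β + α)) (fun α => rep (-β + α)) ?_ ?_ ?_ ?_ ?_
  · intro α _; exact (hrep _).1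
  · intro α _; exact (hrep _).1
  · intro α hα
    refine key _ _ hα ?_
    have := dual_neg (hrep (β + α)).2
    convert this using 1
    abel
  · intro α hα
    refine key _ _ hα ?_
    have := dual_neg (hrep (-β + α)).2
    convert this using 1
    abel
  · intro α _
    rw [← chi_add_left]
    exact chi_congr hh (hrep _).2

lemma rep_card {d : ℕ} {Λ : Finset (Fn r)} (hΛ : IsMinRepSet r d Λ) :
    (Λ.card : ℂ) = (polyFinset r d).card := by
  have h1 : ∑ h ∈ polyFinset r d, ∑ α ∈ Λ, chi α h = (Λ.card : ℂ) := by
    rw [Finset.sum_eq_single 0]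
    · simp [chi_zero_right]
    · intro h hh hne
      exact rep_sum_zero hΛ (mem_polyFinset.mp hh) hne
    · intro h
      exact absurd (mem_polyFinset.mpr (poly_zero r d)) h
  rw [← h1, Finset.sum_comm]
  obtain ⟨α, ⟨hα, hd⟩, hu⟩ := hΛ.1 0
  rw [zero_sub] at hd
  rw [Finset.sum_eq_single α]
  · apply sum_poly_dual
    simpa using dual_neg hd
  · intro b hb hne
    apply sum_poly_nondual
    intro hbd
    exact hne (hu b ⟨hb, by simpa using dual_neg hbd⟩)
  · intro h; exact absurd hα h

lemma inversion {d : ℕ} {Λ : Finset (Fn r)} (hΛ : IsMinRepSet r d Λ) (B : Fn r → ℂ)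
    {f : Fn r} (hf : f ∈ PolySet r d) : ∑ α ∈ Λ, fourierP r d B α * chi α f = B f := by
  have h1 : ∀ α, fourierP r d B α * chi α f
      = ∑ g ∈ polyFinset r d, (B g / (polyFinset r d).card) * chi α (f + -g) := by
    intro α
    rw [fourierP, Finset.sum_div, Finset.sum_mul]
    refine Finset.sum_congr rfl fun g _ => ?_
    rw [chi_conj, chi_neg_comm, chi_add_right]
    ring
  simp_rw [h1]
  rw [Finset.sum_comm]
  simp_rw [← Finset.mul_sum]
  rw [Finset.sum_eq_single f]
  · simp only [add_neg_cancel, chi_zero_right, Finset.sum_const, nsmul_eq_mul, mul_one]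
    rw [rep_card hΛ, div_mul_cancel₀ _ (poly_card_ne r d)]
  · intro g hg hne
    rw [rep_sum_zero hΛ (poly_add hf (poly_neg (mem_polyFinset.mp hg))), mul_zero]
    intro h
    exact hne (by rw [← sub_eq_add_neg, sub_eq_zero] at h; exact h.symm)
  · intro h; exact absurd (mem_polyFinset.mpr hf) h

end dots

/-- Lifting lemma (Lemma 3.6): for `k ≥ 1` and `2kt ≤ 3^{d−1}`, if `B : P_{r,2d} → ℂ` has
Fourier support (w.r.t. minimal-support representatives `Λ`) on levels at most `t`, then
the `2k`-norm of `B` over `P_{r,2d}` equals the `2k`-norm of its lift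
`B' = Σ_{α∈Λ} B̂(α) χ_α` over all of `𝔉_r`. -/
theorem stmt14 (r d k t : ℕ) (hk : 1 ≤ k) (hkt : (2 * k * t : ℝ) ≤ (3 : ℝ) ^ ((d : ℝ) - 1))
    (Λ : Finset (Fn r)) (hΛ : IsMinRepSet r (2 * d) Λ)
    (B : Fn r → ℂ) (hB : ∀ α ∈ Λ, t < supp α → fourierP r (2 * d) B α = 0) :
    ((∑ f ∈ polyFinset r (2 * d), ‖B f‖ ^ (2 * k)) /
        ((polyFinset r (2 * d)).card : ℝ)) ^ (1 / (2 * (k : ℝ)))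
      = ((∑ f : Fn r, ‖∑ α ∈ Λ, fourierP r (2 * d) B α * chi α f‖ ^ (2 * k)) /
          (Fintype.card (Fn r) : ℝ)) ^ (1 / (2 * (k : ℝ))) := by
  have hm : k * (t + t) ≤ 3 ^ d := by
    have h1 : (3 : ℝ) ^ ((d : ℝ) - 1) ≤ 3 ^ (d : ℝ) :=
      Real.rpow_le_rpow_of_exponent_le (by norm_num) (by linarith)
    rw [Real.rpow_natCast] at h1
    have h2 : ((k * (t + t) : ℕ) : ℝ) ≤ ((3 ^ d : ℕ) : ℝ) := by
      push_cast
      linarith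
    exact_mod_cast h2
  set F : Fn r → ℂ := fun f => ∑ α ∈ Λ, fourierP r (2 * d) B α * chi α f with hF
  have hFeq : F = ∑ α ∈ Λ, fourierP r (2 * d) B α • chi α := by
    funext f; simp [hF]
  have hFm : F ∈ lowSpan r t := by
    rw [hFeq]
    refine Submodule.sum_mem _ fun α hα => ?_
    by_cases h : t < supp α
    · rw [hB α hα h, zero_smul]; exact Submodule.zero_mem _
    · exact Submodule.smul_mem _ _ (Submodule.subset_span ⟨α, not_lt.mp h, rfl⟩)
  set G : Fn r → ℂ := fun f => (starRingEnd ℂ) (F f) with hG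
  have hGeq : G = ∑ α ∈ Λ, (starRingEnd ℂ) (fourierP r (2 * d) B α) • chi (-α) := by
    funext f; simp [hG, hF, chi_conj]
  have hGm : G ∈ lowSpan r t := by
    rw [hGeq]
    refine Submodule.sum_mem _ fun α hα => ?_
    by_cases h : t < supp α
    · rw [hB α hα h, map_zero, zero_smul]; exact Submodule.zero_mem _
    · exact Submodule.smul_mem _ _
        (Submodule.subset_span ⟨-α, (supp_neg α).le.trans (not_lt.mp h), rfl⟩)
  have havg := lowSpan_avg hm (lowSpan_pow (lowSpan_mul hFm hGm) k)
  have hval : ∀ f, ((F * G) ^ k) f = ((‖F f‖ ^ (2 * k) : ℝ) : ℂ) := by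
    intro f
    simp only [Pi.pow_apply, Pi.mul_apply, hG, Complex.mul_conj', pow_mul]
    push_cast
    rfl
  simp only [hval] at havg
  have hl : ∑ f ∈ polyFinset r (2 * d), ‖B f‖ ^ (2 * k)
      = ∑ f ∈ polyFinset r (2 * d), ‖F f‖ ^ (2 * k) := by
    refine Finset.sum_congr rfl fun f hf => ?_
    rw [hF, ← inversion hΛ B (mem_polyFinset.mp hf)]
  rw [hl]
  congr 1
  exact_mod_cast havg
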